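/- With the notation and hypotheses of the context (in particular τ(x₀, m₀) = 0, i.e. det X' = 0), one has the factorization γ·μ·τ(x₀ + η, m₀ − 1) = (λ₁ − λ₂)·τ(x₀ + η, m₀)·τ(x₀, m₀ − 1). -/

import Mathlib

open Matrix

/-!
Put `A = λ₁ - Z` and `B = λ₂ - Z`. The relation `[X', Z] + 1 = e fᵀ` turns each of
`A (X' + A⁻¹)`, `(X' - B⁻¹) B` and `A (X' + A⁻¹ - B⁻¹) B` into a rank-one perturbation, by a
multiple of `e fᵀ`, of a product `P X' Q` with `P ∈ {1, B}` and `Q ∈ {1, A}`. As `det X' = 0` and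
`adj X' = v wᵀ`, the matrix determinant lemma splits `det (P X' Q + e fᵀ)` into the product of
`fᵀ (adj Q) v` and `wᵀ (adj P) e`, and the factorization compares the three resulting products.
-/

section RankOnePerturbation

variable {R ι : Type*} [CommRing R] [Fintype ι] [DecidableEq ι]

theorem det_mul_det_add_vecMulVec (M : Matrix ι ι R) (u v : ι → R) :
    M.det * (M + vecMulVec u v).det = M.det * (M.det + v ⬝ᵥ M.adjugate *ᵥ u) := by
  let bordered : Matrix (ι ⊕ Unit) (ι ⊕ Unit) R :=
    fromBlocks M (replicateCol Unit (-u)) (replicateRow Unit v) 1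
  -- Right multiplication by this matrix clears the last column of `bordered`.
  let clearing : Matrix (ι ⊕ Unit) (ι ⊕ Unit) R :=
    fromBlocks 1 (replicateCol Unit (M.adjugate *ᵥ u)) 0 (scalar Unit M.det)
  have det_bordered : bordered.det = (M + vecMulVec u v).det := by
    rw [det_fromBlocks_one₂₂, ← vecMulVec_eq, neg_vecMulVec, sub_neg_eq_add]
  have det_clearing : clearing.det = M.det := by
    simp [clearing]
  have mul_clearing : bordered * clearing = fromBlocks M 0 (replicateRow Unit v)
      (scalar Unit (M.det + v ⬝ᵥ M.adjugate *ᵥ u)) := by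
    have upper_right : M * replicateCol Unit (M.adjugate *ᵥ u) +
        replicateCol Unit (-u) * scalar Unit M.det = 0 := by
      rw [← replicateCol_mulVec, mulVec_mulVec, mul_adjugate, smul_mulVec, one_mulVec]
      ext
      simp [mul_comm, mul_diagonal]
    have lower_right : replicateRow Unit v * replicateCol Unit (M.adjugate *ᵥ u) +
        scalar Unit M.det = scalar Unit (M.det + v ⬝ᵥ M.adjugate *ᵥ u) := by
      ext
      simp [add_comm]
    simp only [bordered, clearing, fromBlocks_multiply, Matrix.mul_one, Matrix.one_mul,
      Matrix.mul_zero, add_zero, upper_right, lower_right]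
  calc M.det * (M + vecMulVec u v).det
      = (bordered * clearing).det := by rw [det_mul, det_bordered, det_clearing, mul_comm]
    _ = M.det * (M.det + v ⬝ᵥ M.adjugate *ᵥ u) := by
      rw [mul_clearing, det_fromBlocks_zero₁₂, scalar_apply, det_diagonal, Fintype.prod_unique]

/-- Extends Mathlib's `det_add_replicateCol_mul_replicateRow` to singular matrices. -/
theorem det_add_vecMulVec (M : Matrix ι ι R) (u v : ι → R) :
    (M + vecMulVec u v).det = M.det + v ⬝ᵥ M.adjugate *ᵥ u := by
  -- `X + M` has monic, hence cancellable, determinant; then specialize `X` to `0`.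
  let N : Matrix ι ι (Polynomial R) := charmatrix (-M)
  let eval₀ : Polynomial R →+* R := Polynomial.evalRingHom 0
  have generic : (N + vecMulVec (Polynomial.C ∘ u) (Polynomial.C ∘ v)).det =
      N.det + (Polynomial.C ∘ v) ⬝ᵥ N.adjugate *ᵥ (Polynomial.C ∘ u) :=
    (charpoly_monic (-M)).isRegular.left (det_mul_det_add_vecMulVec N _ _)
  have map_N : eval₀.mapMatrix N = M := by
    ext i j
    by_cases hij : i = j <;> simp [N, eval₀, hij]
  have map_C (x : ι → R) : eval₀ ∘ Polynomial.C ∘ x = x := by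
    ext
    simp [eval₀]
  have map_vecMulVec : eval₀.mapMatrix (vecMulVec (Polynomial.C ∘ u) (Polynomial.C ∘ v)) =
      vecMulVec u v := by
    ext
    simp [eval₀, vecMulVec_apply]
  have map_mulVec : eval₀ ∘ (N.adjugate *ᵥ (Polynomial.C ∘ u)) = M.adjugate *ᵥ u := by
    ext i
    rw [Function.comp_apply, RingHom.map_mulVec, ← RingHom.mapMatrix_apply, RingHom.map_adjugate,
      map_N, map_C]
  simpa only [map_add, RingHom.map_dotProduct, RingHom.map_det, map_N, map_C, map_vecMulVec,
    map_mulVec] using congrArg eval₀ generic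

theorem det_mul_mul_add_vecMulVec {M : Matrix ι ι R} {v w : ι → R} (hdet : M.det = 0)
    (hadj : M.adjugate = vecMulVec v w) (P Q : Matrix ι ι R) (e f : ι → R) :
    (P * M * Q + vecMulVec e f).det = (f ⬝ᵥ Q.adjugate *ᵥ v) * (w ⬝ᵥ P.adjugate *ᵥ e) := by
  have adjugate_eq : (P * M * Q).adjugate =
      vecMulVec (Q.adjugate *ᵥ v) (w ᵥ* P.adjugate) := by
    rw [adjugate_mul_distrib, adjugate_mul_distrib, hadj, vecMulVec_mul, mul_vecMulVec]
  rw [det_add_vecMulVec, adjugate_eq, vecMulVec_mulVec, det_mul, det_mul, hdet, dotProduct_mulVec w]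
  simp [mul_comm]

end RankOnePerturbation

section ResolventShift

variable {R ι : Type*} [CommRing R] [Fintype ι] [DecidableEq ι]
  {M Z : Matrix ι ι R} {a b : R} {e f v w : ι → R}

theorem isUnit_det_smul_one_sub (ha : a ∉ spectrum R Z) : IsUnit (a • 1 - Z).det := by
  rwa [spectrum.notMem_iff, Algebra.algebraMap_eq_smul_one, isUnit_iff_isUnit_det] at ha

theorem smul_one_sub_mul_add_inv (hef : M * Z - Z * M + 1 = vecMulVec e f)
    (ha : a ∉ spectrum R Z) :
    (a • 1 - Z) * (M + (a • 1 - Z)⁻¹) = M * (a • 1 - Z) + vecMulVec e f := by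
  rw [mul_add, mul_nonsing_inv _ (isUnit_det_smul_one_sub ha), ← hef]
  simp only [sub_mul, mul_sub, smul_one_mul, mul_smul_one]
  abel

theorem sub_inv_mul_smul_one_sub (hef : M * Z - Z * M + 1 = vecMulVec e f)
    (hb : b ∉ spectrum R Z) :
    (M - (b • 1 - Z)⁻¹) * (b • 1 - Z) = (b • 1 - Z) * M - vecMulVec e f := by
  rw [sub_mul, nonsing_inv_mul _ (isUnit_det_smul_one_sub hb), ← hef]
  simp only [sub_mul, mul_sub, smul_one_mul, mul_smul_one]
  abel

theorem smul_one_sub_mul_add_inv_sub_inv_mul (hef : M * Z - Z * M + 1 = vecMulVec e f)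
    (ha : a ∉ spectrum R Z) (hb : b ∉ spectrum R Z) :
    (a • 1 - Z) * (M + (a • 1 - Z)⁻¹ - (b • 1 - Z)⁻¹) * (b • 1 - Z) =
      (b • 1 - Z) * M * (a • 1 - Z) + (b - a) • vecMulVec e f := by
  have clear_inverses : (a • 1 - Z) * (M + (a • 1 - Z)⁻¹ - (b • 1 - Z)⁻¹) * (b • 1 - Z) =
      (a • 1 - Z) * M * (b • 1 - Z) + (b • 1 - Z) - (a • 1 - Z) := by
    rw [mul_sub (a • 1 - Z), sub_mul _ _ (b • 1 - Z), mul_add, add_mul _ _ (b • 1 - Z),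
      mul_nonsing_inv _ (isUnit_det_smul_one_sub ha), one_mul,
      nonsing_inv_mul_cancel_right _ _ (isUnit_det_smul_one_sub hb)]
  rw [clear_inverses, ← hef]
  simp only [sub_mul, mul_sub, smul_mul_assoc, mul_smul_comm, one_mul, mul_one]
  module

theorem det_add_inv_sub_inv_factorization (hef : M * Z - Z * M + 1 = vecMulVec e f)
    (hdet : M.det = 0) (hadj : M.adjugate = vecMulVec v w)
    (ha : a ∉ spectrum R Z) (hb : b ∉ spectrum R Z) :
    (w ⬝ᵥ e) * (f ⬝ᵥ v) * (M + (a • 1 - Z)⁻¹ - (b • 1 - Z)⁻¹).det =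
      (a - b) * (M + (a • 1 - Z)⁻¹).det * (M - (b • 1 - Z)⁻¹).det := by
  set A := a • 1 - Z
  set B := b • 1 - Z
  have det_add_inv : A.det * (M + A⁻¹).det = (f ⬝ᵥ A.adjugate *ᵥ v) * (w ⬝ᵥ e) := by
    have := det_mul_mul_add_vecMulVec hdet hadj 1 A e f
    rwa [one_mul, adjugate_one, one_mulVec, ← smul_one_sub_mul_add_inv hef ha, det_mul] at this
  have det_sub_inv : (M - B⁻¹).det * B.det = -((f ⬝ᵥ v) * (w ⬝ᵥ B.adjugate *ᵥ e)) := by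
    have := det_mul_mul_add_vecMulVec hdet hadj B 1 e (-f)
    rwa [mul_one, adjugate_one, one_mulVec, vecMulVec_neg, ← sub_eq_add_neg,
      ← sub_inv_mul_smul_one_sub hef hb, det_mul, neg_dotProduct, neg_mul] at this
  have det_add_inv_sub_inv : A.det * (M + A⁻¹ - B⁻¹).det * B.det =
      (b - a) * (f ⬝ᵥ A.adjugate *ᵥ v) * (w ⬝ᵥ B.adjugate *ᵥ e) := by
    have := det_mul_mul_add_vecMulVec hdet hadj B A e ((b - a) • f)
    rwa [vecMulVec_smul, ← smul_one_sub_mul_add_inv_sub_inv_mul hef ha hb, det_mul, det_mul,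
      smul_dotProduct, smul_eq_mul] at this
  apply ((isUnit_det_smul_one_sub ha).mul (isUnit_det_smul_one_sub hb)).mul_left_cancel
  linear_combination (w ⬝ᵥ e) * (f ⬝ᵥ v) * det_add_inv_sub_inv
    - (a - b) * (M - B⁻¹).det * B.det * det_add_inv
    - (a - b) * (f ⬝ᵥ A.adjugate *ᵥ v) * (w ⬝ᵥ e) * det_sub_inv

end ResolventShift

section TauFunction

variable {R ι : Type*} [CommRing R] [Fintype ι] [DecidableEq ι]

/-- The tau function of a pair `(X, Z)` along the two commuting flows that add multiples of the
resolvents of `Z` at `a` and `b` to `X`. In terms of the original coordinates, `a = λ₁`, `b = λ₂`,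
`s = x / η` and `t = m`; rescaling the first time avoids a division in `R`. -/
noncomputable def resolventTau (X Z : Matrix ι ι R) (a b s t : R) : R :=
  (X + s • (a • (1 : Matrix ι ι R) - Z)⁻¹ + t • (b • (1 : Matrix ι ι R) - Z)⁻¹).det

theorem resolventTau_add_add (X Z : Matrix ι ι R) (a b s t p q : R) :
    resolventTau X Z a b (s + p) (t + q) =
      resolventTau (X + s • (a • 1 - Z)⁻¹ + t • (b • 1 - Z)⁻¹) Z a b p q := by
  unfold resolventTau
  congr 1
  module

theorem tau_factorization_up_general {X Z X' : Matrix ι ι R} {a b s t : R} {e f v w : ι → R}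
    (ha : a ∉ spectrum R Z) (hb : b ∉ spectrum R Z) (hroot : resolventTau X Z a b s t = 0)
    (hX' : X' = X + s • (a • (1 : Matrix ι ι R) - Z)⁻¹ + t • (b • (1 : Matrix ι ι R) - Z)⁻¹)
    (hef : X' * Z - Z * X' + 1 = vecMulVec e f) (hvw : X'.adjugate = vecMulVec v w) :
    (w ⬝ᵥ e) * (f ⬝ᵥ v) * resolventTau X Z a b (s + 1) (t - 1) =
      (a - b) * resolventTau X Z a b (s + 1) t * resolventTau X Z a b s (t - 1) := by
  have tau_shift (p q : R) :
      resolventTau X Z a b (s + p) (t + q) = resolventTau X' Z a b p q := by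
    rw [resolventTau_add_add, hX']
  have hdet : X'.det = 0 := by rwa [hX']
  have shift_both := tau_shift 1 (-1)
  have shift_first := tau_shift 1 0
  have shift_second := tau_shift 0 (-1)
  simp only [resolventTau, add_zero, zero_smul, one_smul, neg_smul, ← sub_eq_add_neg]
    at shift_both shift_first shift_second ⊢
  rw [shift_both, shift_first, shift_second]
  exact det_add_inv_sub_inv_factorization hef hdet hvw ha hb

end TauFunction

/-- factorization `γ·μ·τ(x₀ + η, m₀ − 1) = (λ₁ − λ₂)·τ(x₀ + η, m₀)·τ(x₀, m₀ − 1)`. -/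
theorem tau_factorization_up (n : ℕ) (hn : 1 ≤ n)
    (X Z : Matrix (Fin n) (Fin n) ℂ)
    (hrank : (X * Z - Z * X + 1).rank = 1)
    (η : ℂ) (hη : η ≠ 0)
    (lam₁ lam₂ : ℂ)
    (hlam₁ : lam₁ ∉ spectrum ℂ Z) (hlam₂ : lam₂ ∉ spectrum ℂ Z)
    (τ : ℂ → ℂ → ℂ)
    (hτ : ∀ x m : ℂ, τ x m =
      (X + (x / η) • (lam₁ • (1 : Matrix (Fin n) (Fin n) ℂ) - Z)⁻¹ +
        m • (lam₂ • (1 : Matrix (Fin n) (Fin n) ℂ) - Z)⁻¹).det)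
    (x₀ m₀ : ℂ) (hroot : τ x₀ m₀ = 0)
    (X' : Matrix (Fin n) (Fin n) ℂ)
    (hX' : X' = X + (x₀ / η) • (lam₁ • (1 : Matrix (Fin n) (Fin n) ℂ) - Z)⁻¹ +
        m₀ • (lam₂ • (1 : Matrix (Fin n) (Fin n) ℂ) - Z)⁻¹)
    (hrank' : (X' * Z - Z * X' + 1).rank = 1)
    (e f v w : Fin n → ℂ)
    (hef : X' * Z - Z * X' + 1 = vecMulVec e f)
    (hvw : X'.adjugate = vecMulVec v w) :
    (w ⬝ᵥ e) * (f ⬝ᵥ v) * τ (x₀ + η) (m₀ - 1) =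
      (lam₁ - lam₂) * τ (x₀ + η) m₀ * τ x₀ (m₀ - 1) := by
  have tau_eq (x m : ℂ) : τ x m = resolventTau X Z lam₁ lam₂ (x / η) m := hτ x m
  simp only [tau_eq, add_div, div_self hη] at hroot ⊢
  exact tau_factorization_up_general hlam₁ hlam₂ hroot hX' hef hvw
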